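/- arXiv:1412.6364 — 2 statements merged into one kernel-verified Lean document; each statement's English description precedes it below -/
import Mathlib

section
/- For every non-negative integer j, the following Mehler–Heine type limits hold uniformly on compact subsets of the complex plane: with a_{2n} = (−1)^n √(nπ)/(2^{2n} n!) and a_{2n+1} = (−1)^n √π/(2^{2n+1} n!), one has (a_{2n}/(2√n)^j) · H_{2n}^{(j)}(x/(2√n)) → (d/dx)^j cos x and (a_{2n+1}/(2√n)^j) · H_{2n+1}^{(j)}(x/(2√n)) → (d/dx)^j sin x as n → ∞, where H_m^{(j)} denotes the j-th derivative of the Hermite polynomial H_m. -/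
open Polynomial

/-- The physicists' Hermite polynomials: `H 0 = 1`, `H (n+1) = 2X * H n - (H n)'`. -/
noncomputable def physHermite : ℕ → Polynomial ℝ
  | 0 => 1
  | n + 1 => 2 * X * physHermite n - derivative (physHermite n)

/-- Wronskian determinant of a finite family of polynomials. -/
noncomputable def Wron {m : ℕ} (f : Fin m → Polynomial ℝ) : Polynomial ℝ :=
  Matrix.det (Matrix.of fun i j : Fin m => (fun p => derivative p)^[(i : ℕ)] (f j))

/-- `lam : Fin r → ℕ` is a partition: weakly decreasing with positive parts. -/
def IsPartition (r : ℕ) (lam : Fin r → ℕ) : Prop :=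
  (∀ i j : Fin r, i ≤ j → lam j ≤ lam i) ∧ ∀ i, 1 ≤ lam i

/-- An even (double) partition: `r` even and `λ_{2k-1} = λ_{2k}`. -/
def IsEvenPartition (r : ℕ) (lam : Fin r → ℕ) : Prop :=
  IsPartition r lam ∧ Even r ∧
    ∀ k : ℕ, ∀ h : 2 * k + 1 < r, lam ⟨2 * k, by omega⟩ = lam ⟨2 * k + 1, h⟩

/-- The generalized Hermite polynomial `H_λ = Wr[H_{λ_r}, H_{λ_{r-1}+1}, …, H_{λ_1+r-1}]`. -/
noncomputable def genHermite (r : ℕ) (lam : Fin r → ℕ) : Polynomial ℝ :=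
  Wron fun j : Fin r => physHermite (lam (Fin.rev j) + j)

/-- The exceptional Hermite polynomial
`P_n = Wr[H_{λ_r}, H_{λ_{r-1}+1}, …, H_{λ_1+r-1}, H_{n-|λ|+r}]`. -/
noncomputable def XHermite (r : ℕ) (lam : Fin r → ℕ) (n : ℕ) : Polynomial ℝ :=
  Wron fun j : Fin (r + 1) =>
    if h : (j : ℕ) < r then physHermite (lam (Fin.rev ⟨(j : ℕ), h⟩) + j)
    else physHermite (n + r - ∑ i, lam i)

/-- The degree sequence `N_λ`: `n ≥ |λ| - r` and `n ≠ |λ| + λ_j - j` for `j = 1, …, r`. -/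
def XDegSeq (r : ℕ) (lam : Fin r → ℕ) (n : ℕ) : Prop :=
  (∑ i, lam i) ≤ n + r ∧ ∀ i : Fin r, n ≠ (∑ i, lam i) + lam i - ((i : ℕ) + 1)

/-! ### Coefficients of the Hermite polynomials -/

lemma physHermite_coeff_succ_zero (n : ℕ) :
    (physHermite (n + 1)).coeff 0 = - (physHermite n).coeff 1 := by
  simp [physHermite, coeff_derivative, mul_assoc]

lemma physHermite_coeff_succ_succ (n k : ℕ) :
    (physHermite (n + 1)).coeff (k + 1) =
      2 * (physHermite n).coeff k - (k + 2) * (physHermite n).coeff (k + 2) := by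
  have : (2 : ℝ[X]) * X * physHermite n = C 2 * (X * physHermite n) := by
    rw [mul_assoc]; rfl
  rw [physHermite, this, coeff_sub, coeff_C_mul, coeff_X_mul, coeff_derivative]
  push_cast
  ring

lemma physHermite_coeff_of_lt (n k : ℕ) (h : n < k) : (physHermite n).coeff k = 0 := by
  induction n generalizing k with
  | zero =>
    rw [physHermite, coeff_one, if_neg (by omega)]
  | succ n ih =>
    obtain ⟨k, rfl⟩ : ∃ l, k = l + 1 := ⟨k - 1, by omega⟩
    rw [physHermite_coeff_succ_succ, ih k (by omega), ih (k + 2) (by omega)]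
    simp

lemma physHermite_coeff_of_odd (n k : ℕ) (h : Odd (n + k)) : (physHermite n).coeff k = 0 := by
  induction n generalizing k with
  | zero =>
    exact physHermite_coeff_of_lt 0 k (by rcases h with ⟨m, hm⟩; omega)
  | succ n ih =>
    cases k with
    | zero =>
      rw [physHermite_coeff_succ_zero, ih 1 (by simpa using h), neg_zero]
    | succ k =>
      rw [physHermite_coeff_succ_succ, ih k (by rcases h with ⟨m, hm⟩; exact ⟨m - 1, by omega⟩),
        ih (k + 2) (by rcases h with ⟨m, hm⟩; exact ⟨m, by omega⟩)]
      simp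

lemma physHermite_coeff_explicit : ∀ m k : ℕ, (physHermite (2 * m + k)).coeff k =
    (-1) ^ m * 2 ^ k * (2 * m + k).factorial / (m.factorial * k.factorial)
  | 0, 0 => by simp [physHermite]
  | 0, k + 1 => by
    have h := physHermite_coeff_explicit 0 k
    have e : 2 * 0 + (k + 1) = (2 * 0 + k) + 1 := by ring
    rw [e, physHermite_coeff_succ_succ, h, physHermite_coeff_of_lt _ (k + 2) (by omega)]
    have : (k.factorial : ℝ) ≠ 0 := by positivity
    have : ((k + 1).factorial : ℝ) ≠ 0 := by positivity
    simp
    field_simp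
    ring
  | m + 1, 0 => by
    have h := physHermite_coeff_explicit m 1
    have e : 2 * (m + 1) + 0 = (2 * m + 1) + 1 := by ring
    rw [e, physHermite_coeff_succ_zero, h]
    simp only [Nat.factorial_succ, Nat.factorial_zero]
    push_cast
    field_simp
    ring
  | m + 1, k + 1 => by
    have h1 := physHermite_coeff_explicit (m + 1) k
    have h2 := physHermite_coeff_explicit m (k + 2)
    have e : 2 * (m + 1) + (k + 1) = (2 * m + (k + 2)) + 1 := by ring
    have e' : 2 * (m + 1) + k = 2 * m + (k + 2) := by ring
    rw [e'] at h1
    rw [e, physHermite_coeff_succ_succ, h1, h2, Nat.factorial_succ (2 * m + (k + 2)),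
      Nat.factorial_succ m, Nat.factorial_succ (k + 1), Nat.factorial_succ k]
    push_cast
    field_simp
    ring
  termination_by m k => 2 * m + k

lemma sum_range_two_mul' (f : ℕ → ℂ) (n : ℕ) :
    ∑ i ∈ Finset.range (2 * n), f i = ∑ k ∈ Finset.range n, (f (2 * k) + f (2 * k + 1)) := by
  induction n with
  | zero => simp
  | succ n ih =>
    rw [show 2 * (n + 1) = 2 * n + 1 + 1 by ring, Finset.sum_range_succ, Finset.sum_range_succ, ih,
      Finset.sum_range_succ]
    ring

lemma aeval_even (n : ℕ) (y : ℂ) : aeval y (physHermite (2 * n)) =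
    ∑ k ∈ Finset.range (n + 1), ((physHermite (2 * n)).coeff (2 * k) : ℂ) * y ^ (2 * k) := by
  have hd : (physHermite (2 * n)).natDegree < 2 * (n + 1) := by
    refine lt_of_le_of_lt (natDegree_le_iff_coeff_eq_zero.2 fun N hN =>
      physHermite_coeff_of_lt _ N hN) (by omega)
  rw [aeval_eq_sum_range' hd, sum_range_two_mul']
  refine Finset.sum_congr rfl fun k _ => ?_
  rw [physHermite_coeff_of_odd (2 * n) (2 * k + 1) ⟨n + k, by ring⟩]
  simp

lemma aeval_odd (n : ℕ) (y : ℂ) : aeval y (physHermite (2 * n + 1)) =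
    ∑ k ∈ Finset.range (n + 1),
      ((physHermite (2 * n + 1)).coeff (2 * k + 1) : ℂ) * y ^ (2 * k + 1) := by
  have hd : (physHermite (2 * n + 1)).natDegree < 2 * (n + 1) := by
    refine lt_of_le_of_lt (natDegree_le_iff_coeff_eq_zero.2 fun N hN =>
      physHermite_coeff_of_lt _ N hN) (by omega)
  rw [aeval_eq_sum_range' hd, sum_range_two_mul']
  refine Finset.sum_congr rfl fun k _ => ?_
  rw [physHermite_coeff_of_odd (2 * n + 1) (2 * k) ⟨n + k, by ring⟩]
  simp

/-! ### The scalar limits -/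

/-- The normalised central binomial coefficient. -/
noncomputable def mhC (n : ℕ) : ℝ :=
  Real.sqrt (n * Real.pi) * (2 * n).factorial / (2 ^ (2 * n) * n.factorial * n.factorial)

lemma mhC_tendsto : Filter.Tendsto mhC Filter.atTop (nhds 1) := by
  have h1 : ∀ n : ℕ, mhC n =
      Real.sqrt (Real.pi * ((n : ℝ) / (2 * n + 1)) / Real.Wallis.W n) := by
    intro n
    symm
    have hsq : Real.pi * ((n : ℝ) / (2 * n + 1)) / Real.Wallis.W n = mhC n * mhC n := by
      rw [mhC, Real.Wallis.W_eq_factorial_ratio]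
      have := Real.mul_self_sqrt (show 0 ≤ (n : ℝ) * Real.pi by positivity)
      rw [div_mul_div_comm, mul_mul_mul_comm, this]
      field_simp
      ring
    rw [hsq, Real.sqrt_mul_self (by unfold mhC; positivity)]
  have h2 : Filter.Tendsto (fun n : ℕ => (n : ℝ) / (2 * n + 1)) Filter.atTop (nhds (1 / 2)) := by
    have h3 : Filter.Tendsto (fun n : ℕ => 1 / 2 * (1 - (1 : ℝ) / ((2 * n : ℝ) + 1)))
        Filter.atTop (nhds (1 / 2 * (1 - 0))) := by
      refine (tendsto_const_nhds.sub ?_).const_mul _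
      refine tendsto_const_nhds.div_atTop ?_
      refine Filter.tendsto_atTop_add_const_right _ _ ?_
      exact tendsto_natCast_atTop_atTop.const_mul_atTop (by norm_num)
    simp only [sub_zero, mul_one] at h3
    refine h3.congr fun n => ?_
    field_simp
    ring
  have h3 := ((h2.const_mul Real.pi).div Real.Wallis.tendsto_W_nhds_pi_div_two
    (by positivity)).sqrt
  have : Real.pi * (1 / 2) / (Real.pi / 2) = 1 := by field_simp
  rw [this, Real.sqrt_one] at h3
  exact h3.congr fun n => (h1 n).symm

lemma mhD_tendsto (k : ℕ) : Filter.Tendsto (fun n : ℕ => (n.descFactorial k : ℝ) / (n : ℝ) ^ k)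
    Filter.atTop (nhds 1) := by
  refine (Asymptotics.isEquivalent_iff_tendsto_one ?_).1 (isEquivalent_descFactorial k)
  filter_upwards [Filter.eventually_gt_atTop 0] with n hn
  positivity

lemma mhD_le (n k : ℕ) : |(n.descFactorial k : ℝ) / (n : ℝ) ^ k| ≤ 1 := by
  rw [abs_of_nonneg (by positivity)]
  refine div_le_one_of_le₀ ?_ (by positivity)
  exact_mod_cast Nat.descFactorial_le_pow n k

/-! ### Dominated convergence -/

lemma unif_of_dominated (g : ℕ → ℂ → ℂ) (f : ℂ → ℂ) (M : ℕ → ℝ) (K : Set ℂ)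
    (hM : Summable M) (hg : ∀ k, ∀ x ∈ K, ‖g k x‖ ≤ M k)
    (hf : ∀ x, HasSum (fun k => g k x) (f x))
    (c : ℕ → ℝ) (hc : Filter.Tendsto c Filter.atTop (nhds 1)) :
    TendstoUniformlyOn (fun n x => ∑ k ∈ Finset.range (n + 1),
      g k x * ((c n * ((n.descFactorial k : ℝ) / (n : ℝ) ^ k) : ℝ) : ℂ)) f Filter.atTop K := by
  rcases K.eq_empty_or_nonempty with rfl | ⟨x0, hx0⟩
  · exact tendstoUniformlyOn_empty
  have hM0 : ∀ k, 0 ≤ M k := fun k => (norm_nonneg _).trans (hg k x0 hx0)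
  set w : ℕ → ℕ → ℝ := fun n k => c n * ((n.descFactorial k : ℝ) / (n : ℝ) ^ k) with hw
  obtain ⟨B, hB⟩ := hc.abs.bddAbove_range
  have hB' : ∀ n, |c n| ≤ B := fun n => hB ⟨n, rfl⟩
  have hwB : ∀ n k, |w n k| ≤ B := fun n k => by
    rw [hw]; simp only [abs_mul]
    calc _ ≤ |c n| * 1 := by gcongr; exact mhD_le n k
      _ ≤ B := by simpa using hB' n
  have hB1 : ∀ n k, |1 - w n k| ≤ 1 + B := fun n k => by
    calc _ ≤ |1| + |w n k| := abs_sub _ _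
      _ ≤ 1 + B := by simpa using hwB n k
  have hT : Filter.Tendsto (fun n => ∑' k, M k * |1 - w n k|) Filter.atTop
      (nhds (∑' k : ℕ, (0 : ℝ))) := by
    refine tendsto_tsum_of_dominated_convergence (bound := fun k => M k * (1 + B))
      (hM.mul_right _) ?_ ?_
    · intro k
      have h := ((hc.mul (mhD_tendsto k)).const_sub 1).abs.const_mul (M k)
      simpa using h
    · refine Filter.Eventually.of_forall fun n k => ?_
      rw [Real.norm_eq_abs, abs_of_nonneg (mul_nonneg (hM0 k) (abs_nonneg _))]
      exact mul_le_mul_of_nonneg_left (hB1 n k) (hM0 k)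
  rw [tsum_zero] at hT
  rw [Metric.tendstoUniformlyOn_iff]
  intro ε hε
  filter_upwards [hT.eventually (gt_mem_nhds hε)] with n hn x hx
  refine lt_of_le_of_lt ?_ hn
  have hs : HasSum (fun k => g k x * ((w n k : ℝ) : ℂ)) (∑ k ∈ Finset.range (n + 1),
      g k x * ((w n k : ℝ) : ℂ)) := by
    refine hasSum_sum_of_ne_finset_zero fun k hk => ?_
    have : n < k := by simpa using hk
    simp [hw, Nat.descFactorial_of_lt this]
  have hd := (hf x).sub hs
  rw [dist_eq_norm, ← hd.tsum_eq]
  refine tsum_of_norm_bounded (Summable.hasSum ?_) fun k => ?_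
  · refine Summable.of_nonneg_of_le (fun k => mul_nonneg (hM0 k) (abs_nonneg _))
      (fun k => mul_le_mul_of_nonneg_left (hB1 n k) (hM0 k)) (hM.mul_right _)
  · have : g k x - g k x * ((w n k : ℝ) : ℂ) = g k x * ((1 - w n k : ℝ) : ℂ) := by
      push_cast; ring
    rw [this, norm_mul, Complex.norm_real, Real.norm_eq_abs]
    exact mul_le_mul_of_nonneg_right (hg k x hx) (abs_nonneg _)

/-! ### The base case -/

lemma term_even (n k : ℕ) (hn : 0 < n) (hk : k ≤ n) :
    ((-1 : ℝ) ^ n * Real.sqrt (n * Real.pi) / (2 ^ (2 * n) * Nat.factorial n)) *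
      (physHermite (2 * n)).coeff (2 * k) / (2 * Real.sqrt n) ^ (2 * k) =
    (-1) ^ k / (2 * k).factorial * (mhC n * ((n.descFactorial k : ℝ) / (n : ℝ) ^ k)) := by
  obtain ⟨m, rfl⟩ := Nat.exists_eq_add_of_le' hk
  have e : 2 * (m + k) = 2 * m + 2 * k := by ring
  have hsq : (2 * Real.sqrt ((m + k : ℕ) : ℝ)) ^ (2 * k) = 2 ^ (2 * k) * ((m + k : ℕ) : ℝ) ^ k := by
    rw [mul_pow, pow_mul (Real.sqrt _), Real.sq_sqrt (by positivity)]
  have hdf : (m.factorial : ℝ) * ((m + k).descFactorial k : ℝ) = ((m + k).factorial : ℝ) := by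
    have := Nat.factorial_mul_descFactorial (n := m + k) (k := k) (by omega)
    rw [Nat.add_sub_cancel] at this
    exact_mod_cast this
  have hm : (m.factorial : ℝ) ≠ 0 := by positivity
  have hdf' : ((m + k).descFactorial k : ℝ) = ((m + k).factorial : ℝ) / m.factorial := by
    rw [← hdf]; field_simp
  have hc : (physHermite (2 * (m + k))).coeff (2 * k) =
      (-1) ^ m * 2 ^ (2 * k) * (2 * (m + k)).factorial / (m.factorial * (2 * k).factorial) := by
    rw [e]; exact physHermite_coeff_explicit m (2 * k)
  have hmk : (((m + k : ℕ)) : ℝ) ≠ 0 := by positivity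
  have hneg : (-1 : ℝ) ^ (m + k) * (-1) ^ m = (-1) ^ k := by
    rw [pow_add, mul_right_comm, ← mul_pow]; simp
  rw [hc, hsq, hdf', mhC, ← hneg]
  have h2 : (0 : ℝ) < 2 ^ (2 * (m + k)) := by positivity
  have h3 : (0 : ℝ) < 2 ^ (2 * k) := by positivity
  generalize (2 : ℝ) ^ (2 * (m + k)) = A at *
  generalize (2 : ℝ) ^ (2 * k) = A' at *
  generalize (-1 : ℝ) ^ (m + k) = s at *
  generalize (((m + k : ℕ)) : ℝ) = N at *
  field_simp

lemma term_odd (n k : ℕ) (hn : 0 < n) (hk : k ≤ n) :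
    ((-1 : ℝ) ^ n * Real.sqrt Real.pi / (2 ^ (2 * n + 1) * Nat.factorial n)) *
      (physHermite (2 * n + 1)).coeff (2 * k + 1) / (2 * Real.sqrt n) ^ (2 * k + 1) =
    (-1) ^ k / (2 * k + 1).factorial *
      ((mhC n * ((2 * n + 1) / (2 * n))) * ((n.descFactorial k : ℝ) / (n : ℝ) ^ k)) := by
  have hev := term_even n k hn hk
  obtain ⟨m, rfl⟩ := Nat.exists_eq_add_of_le' hk
  have hc : (physHermite (2 * (m + k))).coeff (2 * k) =
      (-1) ^ m * 2 ^ (2 * k) * (2 * (m + k)).factorial / (m.factorial * (2 * k).factorial) := by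
    rw [show 2 * (m + k) = 2 * m + 2 * k by ring]; exact physHermite_coeff_explicit m (2 * k)
  have hc' : (physHermite (2 * (m + k) + 1)).coeff (2 * k + 1) =
      (-1) ^ m * 2 ^ (2 * k + 1) * (2 * (m + k) + 1).factorial /
        (m.factorial * (2 * k + 1).factorial) := by
    rw [show 2 * (m + k) + 1 = 2 * m + (2 * k + 1) by ring]
    exact physHermite_coeff_explicit m (2 * k + 1)
  have hmk : (0 : ℝ) < ((m + k : ℕ) : ℝ) := by positivity
  have hs0 : 0 < Real.sqrt ((m + k : ℕ) : ℝ) := Real.sqrt_pos.2 hmk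
  have hss := Real.mul_self_sqrt hmk.le
  have key : ((-1 : ℝ) ^ (m + k) * Real.sqrt Real.pi /
        (2 ^ (2 * (m + k) + 1) * Nat.factorial (m + k))) *
      (physHermite (2 * (m + k) + 1)).coeff (2 * k + 1) /
        (2 * Real.sqrt ((m + k : ℕ) : ℝ)) ^ (2 * k + 1) =
      (((-1 : ℝ) ^ (m + k) * Real.sqrt ((m + k : ℕ) * Real.pi) /
        (2 ^ (2 * (m + k)) * Nat.factorial (m + k))) *
      (physHermite (2 * (m + k))).coeff (2 * k) / (2 * Real.sqrt ((m + k : ℕ) : ℝ)) ^ (2 * k)) *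
      ((2 * ((m + k : ℕ) : ℝ) + 1) / (2 * ((m + k : ℕ) : ℝ)) / (2 * k + 1)) := by
    rw [hc, hc', Real.sqrt_mul hmk.le, Nat.factorial_succ (2 * (m + k)), Nat.factorial_succ (2 * k)]
    rw [pow_succ (2 * Real.sqrt _), pow_succ (2 : ℝ) (2 * k), pow_succ (2 : ℝ) (2 * (m + k))]
    have h2 : (0 : ℝ) < 2 ^ (2 * (m + k)) := by positivity
    have h3 : (0 : ℝ) < 2 ^ (2 * k) := by positivity
    have h4 : 0 < (2 * Real.sqrt ((m + k : ℕ) : ℝ)) ^ (2 * k) := by positivity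
    rw [Nat.cast_mul (2 * (m + k) + 1), Nat.cast_mul (2 * k + 1), Nat.cast_add (2 * (m + k)) 1,
      Nat.cast_add (2 * k) 1, Nat.cast_mul 2 (m + k), Nat.cast_mul 2 k]
    simp only [Nat.cast_one, Nat.cast_ofNat]
    generalize (2 * Real.sqrt ((m + k : ℕ) : ℝ)) ^ (2 * k) = E at *
    generalize (2 : ℝ) ^ (2 * (m + k)) = A at *
    generalize (2 : ℝ) ^ (2 * k) = A' at *
    generalize (-1 : ℝ) ^ (m + k) = s at *
    generalize Real.sqrt ((m + k : ℕ) : ℝ) = S at *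
    rw [← hss]
    field_simp
  rw [key, hev, Nat.factorial_succ (2 * k)]
  push_cast
  field_simp

lemma base_even (K : Set ℂ) (hK : IsCompact K) :
    TendstoUniformlyOn
      (fun (n : ℕ) (x : ℂ) =>
        ((((-1 : ℝ) ^ n * Real.sqrt (n * Real.pi) / (2 ^ (2 * n) * Nat.factorial n) : ℝ)) : ℂ) *
          Polynomial.aeval (x / (2 * (Real.sqrt n : ℂ))) (physHermite (2 * n)))
      Complex.cos Filter.atTop K := by
  obtain ⟨R, hR⟩ := hK.isBounded.exists_norm_le
  have hsum : Summable (fun k : ℕ => |R| ^ (2 * k) / (2 * k).factorial) :=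
    (Real.summable_pow_div_factorial |R|).comp_injective
      (i := fun k : ℕ => 2 * k) (fun a b h => by simpa using h)
  have := unif_of_dominated (fun k x => (-1) ^ k * x ^ (2 * k) / (2 * k).factorial) Complex.cos
    (fun k => |R| ^ (2 * k) / (2 * k).factorial) K hsum
    (fun k x hx => by
      simp only [norm_div, norm_mul, norm_pow, norm_neg, norm_one, one_pow, one_mul,
        Complex.norm_natCast]
      gcongr
      exact (hR x hx).trans (le_abs_self R)) Complex.hasSum_cos mhC mhC_tendsto
  refine this.congr ?_
  filter_upwards [Filter.eventually_gt_atTop 0] with n hn x hx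
  simp only
  rw [aeval_even, Finset.mul_sum]
  refine Finset.sum_congr rfl fun k hk => ?_
  have h := congrArg (fun t : ℝ => (t : ℂ))
    (term_even n k hn (by have := Finset.mem_range.1 hk; omega))
  simp only [Complex.ofReal_mul _ (mhC n * _), Complex.ofReal_div _ ((2 * Real.sqrt n) ^ (2 * k)),
    Complex.ofReal_mul _ ((physHermite (2 * n)).coeff (2 * k))] at h
  have h' : (2 * (Real.sqrt n : ℂ)) ^ (2 * k) = (((2 * Real.sqrt n) ^ (2 * k) : ℝ) : ℂ) := by
    push_cast; rfl
  rw [← mul_assoc, div_pow, h', ← mul_comm_div (c := x ^ _), h]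
  push_cast
  ring

lemma base_odd (K : Set ℂ) (hK : IsCompact K) :
    TendstoUniformlyOn
      (fun (n : ℕ) (x : ℂ) =>
        ((((-1 : ℝ) ^ n * Real.sqrt Real.pi / (2 ^ (2 * n + 1) * Nat.factorial n) : ℝ)) : ℂ) *
          Polynomial.aeval (x / (2 * (Real.sqrt n : ℂ))) (physHermite (2 * n + 1)))
      Complex.sin Filter.atTop K := by
  obtain ⟨R, hR⟩ := hK.isBounded.exists_norm_le
  have hsum : Summable (fun k : ℕ => |R| ^ (2 * k + 1) / (2 * k + 1).factorial) :=
    (Real.summable_pow_div_factorial |R|).comp_injective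
      (i := fun k : ℕ => 2 * k + 1) (fun a b h => by simpa using h)
  have hc : Filter.Tendsto (fun n : ℕ => mhC n * ((2 * (n : ℝ) + 1) / (2 * n))) Filter.atTop
      (nhds 1) := by
    have h1 : Filter.Tendsto (fun n : ℕ => 1 + (1 : ℝ) / (2 * n)) Filter.atTop
        (nhds (1 + 0)) := by
      refine tendsto_const_nhds.add (tendsto_const_nhds.div_atTop ?_)
      exact tendsto_natCast_atTop_atTop.const_mul_atTop (by norm_num)
    have h2 := mhC_tendsto.mul h1
    simp only [add_zero, mul_one] at h2
    refine h2.congr' ?_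
    filter_upwards [Filter.eventually_gt_atTop 0] with n hn
    field_simp
  have := unif_of_dominated (fun k x => (-1) ^ k * x ^ (2 * k + 1) / (2 * k + 1).factorial)
    Complex.sin (fun k => |R| ^ (2 * k + 1) / (2 * k + 1).factorial) K hsum
    (fun k x hx => by
      simp only [norm_div, norm_mul, norm_pow, norm_neg, norm_one, one_pow, one_mul,
        Complex.norm_natCast]
      gcongr
      exact (hR x hx).trans (le_abs_self R)) Complex.hasSum_sin _ hc
  refine this.congr ?_
  filter_upwards [Filter.eventually_gt_atTop 0] with n hn x hx
  simp only
  rw [aeval_odd, Finset.mul_sum]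
  refine Finset.sum_congr rfl fun k hk => ?_
  have h := congrArg (fun t : ℝ => (t : ℂ))
    (term_odd n k hn (by have := Finset.mem_range.1 hk; omega))
  simp only [Complex.ofReal_mul _ (mhC n * _ * _),
    Complex.ofReal_div _ ((2 * Real.sqrt n) ^ (2 * k + 1)),
    Complex.ofReal_mul _ ((physHermite (2 * n + 1)).coeff (2 * k + 1))] at h
  have h' : (2 * (Real.sqrt n : ℂ)) ^ (2 * k + 1) =
      (((2 * Real.sqrt n) ^ (2 * k + 1) : ℝ) : ℂ) := by
    push_cast; rfl
  rw [← mul_assoc, div_pow, h', ← mul_comm_div (c := x ^ _), h]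
  push_cast
  ring

/-! ### Differentiation -/

lemma unif_deriv (a : ℕ → ℝ) (P : ℕ → ℝ[X]) (f : ℂ → ℂ)
    (h : ∀ K : Set ℂ, IsCompact K → TendstoUniformlyOn (fun (n : ℕ) (x : ℂ) =>
      (a n : ℂ) * aeval (x / (2 * (Real.sqrt n : ℂ))) (P n)) f Filter.atTop K) (j : ℕ) :
    ∀ K : Set ℂ, IsCompact K → TendstoUniformlyOn (fun (n : ℕ) (x : ℂ) =>
      ((a n / (2 * Real.sqrt n) ^ j : ℝ) : ℂ) * aeval (x / (2 * (Real.sqrt n : ℂ)))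
        ((fun p => derivative p)^[j] (P n))) (fun x => iteratedDeriv j f x) Filter.atTop K := by
  induction j with
  | zero => simpa using h
  | succ j ih =>
    have hl := (tendstoLocallyUniformlyOn_iff_forall_isCompact (isOpen_univ (X := ℂ))).2
      fun K _ hK => ih K hK
    have hder : ∀ (n : ℕ) (x : ℂ), HasDerivAt (fun x : ℂ =>
        ((a n / (2 * Real.sqrt n) ^ j : ℝ) : ℂ) * aeval (x / (2 * (Real.sqrt n : ℂ)))
        ((fun p => derivative p)^[j] (P n)))
        (((a n / (2 * Real.sqrt n) ^ (j + 1) : ℝ) : ℂ) * aeval (x / (2 * (Real.sqrt n : ℂ)))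
        ((fun p => derivative p)^[j + 1] (P n))) x := by
      intro n x
      have h1 := ((fun p => derivative p)^[j] (P n)).hasDerivAt_aeval (x / (2 * (Real.sqrt n : ℂ)))
      have h2 := (h1.comp x ((hasDerivAt_id x).div_const (2 * (Real.sqrt n : ℂ)))).const_mul
        ((a n / (2 * Real.sqrt n) ^ j : ℝ) : ℂ)
      refine h2.congr_deriv ?_
      rw [Function.iterate_succ_apply']
      push_cast
      rw [pow_succ]
      simp only [div_eq_mul_inv, mul_inv]
      ring
    have hd := hl.deriv (Filter.Eventually.of_forall fun n x _ =>
      (hder n x).differentiableAt.differentiableWithinAt) isOpen_univ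
    intro K hK
    have := (tendstoLocallyUniformlyOn_iff_forall_isCompact (isOpen_univ (X := ℂ))).1 hd K
      (Set.subset_univ _) hK
    rw [iteratedDeriv_succ]
    refine this.congr (Filter.Eventually.of_forall fun n x _ => ?_)
    exact (hder n x).deriv

/-- Eqs. (18)-(19): differentiated Mehler–Heine formulas. With
`a_{2n} = (-1)^n √(nπ)/(2^{2n} n!)` and `a_{2n+1} = (-1)^n √π/(2^{2n+1} n!)`,
for every `j ≥ 0`, uniformly on compact subsets of `ℂ`,
`a_{2n}/(2√n)^j · H_{2n}^{(j)}(x/(2√n)) → (d/dx)^j cos x` and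
`a_{2n+1}/(2√n)^j · H_{2n+1}^{(j)}(x/(2√n)) → (d/dx)^j sin x`. -/
theorem mehler_heine_derivatives
    (j : ℕ) (K : Set ℂ) (hK : IsCompact K) :
    TendstoUniformlyOn
      (fun (n : ℕ) (x : ℂ) =>
        ((((-1 : ℝ) ^ n * Real.sqrt (n * Real.pi) / (2 ^ (2 * n) * Nat.factorial n) /
            (2 * Real.sqrt n) ^ j : ℝ)) : ℂ) *
          Polynomial.aeval (x / (2 * (Real.sqrt n : ℂ)))
            ((fun p => derivative p)^[j] (physHermite (2 * n))))
      (fun x : ℂ => iteratedDeriv j Complex.cos x) Filter.atTop K ∧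
    TendstoUniformlyOn
      (fun (n : ℕ) (x : ℂ) =>
        ((((-1 : ℝ) ^ n * Real.sqrt Real.pi / (2 ^ (2 * n + 1) * Nat.factorial n) /
            (2 * Real.sqrt n) ^ j : ℝ)) : ℂ) *
          Polynomial.aeval (x / (2 * (Real.sqrt n : ℂ)))
            ((fun p => derivative p)^[j] (physHermite (2 * n + 1))))
      (fun x : ℂ => iteratedDeriv j Complex.sin x) Filter.atTop K := by
  exact ⟨unif_deriv _ (fun n => physHermite (2 * n)) _ base_even j K hK,
    unif_deriv _ (fun n => physHermite (2 * n + 1)) _ base_odd j K hK⟩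
end

section
/- Let λ be an even partition of length r and let n ∈ N_λ with n ≥ |λ| + λ_1. Then the exceptional Hermite polynomial P_n has exactly n − |λ| real zeros, all of which are simple, and exactly |λ| non-real zeros (counted with multiplicity). -/
open Polynomial

/-- Bordered minor: the first `j` rows and columns of `F`, plus row `p` and column `q`. -/
noncomputable def bMinor {R : Type*} [CommRing R] (F : ℕ → ℕ → R) (j p q : ℕ) : R :=
  Matrix.det (Matrix.of fun i c : Fin (j + 1) =>
    F (if (i : ℕ) < j then i else p) (if (c : ℕ) < j then c else q))

noncomputable def lMinor {R : Type*} [CommRing R] (F : ℕ → ℕ → R) (j : ℕ) : R :=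
  Matrix.det (Matrix.of fun i c : Fin j => F i c)

theorem bMinor_schur {K : Type*} [Field K] (F : ℕ → ℕ → K) (j p q : ℕ)
    [Invertible (Matrix.of fun i c : Fin j => F i c)] :
    bMinor F j p q = lMinor F j * (F p q -
      ∑ c : Fin j, (∑ i : Fin j, F p i * (⅟(Matrix.of fun i c : Fin j => F i c)) i c) * F c q) := by
  unfold bMinor lMinor
  rw [← Matrix.det_submatrix_equiv_self (finSumFinEquiv (m := j) (n := 1))]
  have : (Matrix.of fun i c : Fin (j + 1) =>
    F (if (i : ℕ) < j then i else p) (if (c : ℕ) < j then c else q)).submatrix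
      (finSumFinEquiv (m := j) (n := 1)) (finSumFinEquiv (m := j) (n := 1)) =
      Matrix.fromBlocks (Matrix.of fun i c : Fin j => F i c)
        (Matrix.of fun (i : Fin j) (_ : Fin 1) => F i q)
        (Matrix.of fun (_ : Fin 1) (c : Fin j) => F p c)
        (Matrix.of fun (_ : Fin 1) (_ : Fin 1) => F p q) := by
    ext a b
    rcases a with a | a <;> rcases b with b | b <;> simp
  rw [this, Matrix.det_fromBlocks₁₁, Matrix.det_fin_one]
  simp [Matrix.mul_apply]

theorem lMinor_schur {K : Type*} [Field K] (F : ℕ → ℕ → K) (j : ℕ)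
    (h : lMinor F j ≠ 0) :
    lMinor F j * lMinor F (j + 2) = bMinor F j j j * bMinor F j (j+1) (j+1)
      - bMinor F j (j+1) j * bMinor F j j (j+1) := by
  have hu : IsUnit (Matrix.of fun i c : Fin j => F i c) := by
    rw [Matrix.isUnit_iff_isUnit_det]
    exact isUnit_iff_ne_zero.mpr h
  let _ := hu.invertible
  rw [bMinor_schur, bMinor_schur, bMinor_schur, bMinor_schur]
  have h2 : lMinor F (j + 2) = lMinor F j * Matrix.det (Matrix.of fun a b : Fin 2 => 
    (F (j + a) (j + b) - ∑ c : Fin j, (∑ i : Fin j, F (j+a) i *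
      (⅟(Matrix.of fun i c : Fin j => F i c)) i c) * F c (j+b))) := by
    unfold lMinor
    rw [← Matrix.det_submatrix_equiv_self (finSumFinEquiv (m := j) (n := 2))]
    have : (Matrix.of fun i c : Fin (j + 2) => F i c).submatrix
        (finSumFinEquiv (m := j) (n := 2)) (finSumFinEquiv (m := j) (n := 2)) =
        Matrix.fromBlocks (Matrix.of fun i c : Fin j => F i c)
          (Matrix.of fun (i : Fin j) (b : Fin 2) => F i (j+b))
          (Matrix.of fun (a : Fin 2) (c : Fin j) => F (j+a) c)
          (Matrix.of fun (a : Fin 2) (b : Fin 2) => F (j+a) (j+b)) := by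
      ext a b
      rcases a with a | a <;> rcases b with b | b <;> simp
    rw [this, Matrix.det_fromBlocks₁₁]
    congr 2
  rw [h2, Matrix.det_fin_two]
  simp
  ring

theorem lMinor_mul {R : Type*} [CommRing R] [IsDomain R] (F : ℕ → ℕ → R) (j : ℕ)
    (h : lMinor F j ≠ 0) :
    lMinor F j * lMinor F (j + 2) = bMinor F j j j * bMinor F j (j+1) (j+1)
      - bMinor F j (j+1) j * bMinor F j j (j+1) := by
  let φ := algebraMap R (FractionRing R)
  have hφ : Function.Injective φ := IsFractionRing.injective R (FractionRing R)
  have hl : ∀ j, φ (lMinor F j) = lMinor (fun i c => φ (F i c)) j := by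
    intro j; unfold lMinor; rw [RingHom.map_det]; rfl
  have hb : ∀ j p q, φ (bMinor F j p q) = bMinor (fun i c => φ (F i c)) j p q := by
    intro j p q; unfold bMinor; rw [RingHom.map_det]; rfl
  apply hφ
  simp only [map_mul, map_sub, hl, hb]
  apply lMinor_schur
  rw [← hl]
  exact fun h0 => h (hφ (by simpa using h0))

theorem derivative_det_rows {n : ℕ} (M : Matrix (Fin n) (Fin n) (Polynomial ℝ)) :
    derivative M.det = ∑ i, (M.updateRow i (fun c => derivative (M i c))).det := by
  simp only [Matrix.det_apply]
  rw [derivative_sum, Finset.sum_comm]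
  refine Finset.sum_congr rfl fun σ _ => ?_
  rw [← Finset.smul_sum]
  have : derivative (Equiv.Perm.sign σ • ∏ i, M (σ i) i)
      = Equiv.Perm.sign σ • derivative (∏ i, M (σ i) i) := by
    rcases Int.units_eq_one_or (Equiv.Perm.sign σ) with h | h <;> simp [h]
  rw [this, derivative_prod_finset]
  congr 1
  refine (Finset.sum_congr rfl fun i _ => ?_).trans (Equiv.sum_comp σ
    (fun i => ∏ c, M.updateRow i (fun c => derivative (M i c)) (σ c) c))
  rw [← Finset.mul_prod_erase Finset.univ _ (Finset.mem_univ i)]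
  rw [mul_comm, Matrix.updateRow_self]
  congr 1
  refine Finset.prod_congr rfl fun c hc => ?_
  rw [Matrix.updateRow_ne]
  intro h
  exact (Finset.ne_of_mem_erase hc) (σ.injective h)

/-- The matrix of iterated derivatives of a sequence of polynomials. -/
noncomputable def wF (f : ℕ → Polynomial ℝ) (i c : ℕ) : Polynomial ℝ :=
  (fun p => derivative p)^[i] (f c)

theorem derivative_bMinor (f : ℕ → Polynomial ℝ) (j q : ℕ) :
    derivative (bMinor (wF f) j j q) = bMinor (wF f) j (j+1) q := by
  unfold bMinor
  rw [derivative_det_rows]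
  rw [Finset.sum_eq_single (Fin.last j)]
  · congr 1
    ext1 i c
    by_cases hi : i = Fin.last j
    · subst hi
      simp [wF, Function.iterate_succ_apply']
    · rw [Matrix.updateRow_ne hi]
      have : (i : ℕ) < j := by
        have := i.2
        have : (i : ℕ) ≠ j := fun h => hi (Fin.ext h)
        omega
      simp [this]
  · intro i _ hi
    have hij : (i : ℕ) < j := by
      have := i.2
      have : (i : ℕ) ≠ j := fun h => hi (Fin.ext h)
      omega
    apply Matrix.det_zero_of_row_eq (i := i) (j := ⟨i + 1, by omega⟩)
    · intro h
      have := congrArg Fin.val h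
      simp at this
    · rw [Matrix.updateRow_self, Matrix.updateRow_ne]
      · funext c
        have h2 : (if (i : ℕ) + 1 < j then (i : ℕ) + 1 else j) = i + 1 := by
          split_ifs <;> omega
        simp [hij, h2, wF, Function.iterate_succ_apply']
      · intro h
        have := congrArg Fin.val h
        simp at this
  · simp

/-- `tau f j = Wr[f 0, …, f (j-1)]`. -/
noncomputable def tau (f : ℕ → Polynomial ℝ) (j : ℕ) : Polynomial ℝ := lMinor (wF f) j

/-- `sig f j g = Wr[f 0, …, f (j-1), g]`. -/
noncomputable def sig (f : ℕ → Polynomial ℝ) (j : ℕ) (g : Polynomial ℝ) : Polynomial ℝ :=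
  Wron fun i : Fin (j + 1) => if (i : ℕ) < j then f i else g

theorem tau_zero (f : ℕ → Polynomial ℝ) : tau f 0 = 1 := by
  simp [tau, lMinor]

theorem sig_zero (f : ℕ → Polynomial ℝ) (g) : sig f 0 g = g := by
  simp [sig, Wron]

theorem sig_self (f : ℕ → Polynomial ℝ) (j) : sig f j (f j) = tau f (j+1) := by
  unfold sig tau lMinor Wron
  congr 1
  ext1 i c
  simp only [wF, Matrix.of_apply]
  congr 1
  split_ifs with h
  · rfl
  · congr 1
    have := c.2
    omega

theorem bMinor_eq_sig (f : ℕ → Polynomial ℝ) (j q) :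
    bMinor (wF f) j j q = sig f j (f q) := by
  unfold sig bMinor Wron
  congr 1
  ext1 i c
  simp only [wF, Matrix.of_apply]
  have h1 : (if (i : ℕ) < j then (i : ℕ) else j) = i := by
    have := i.2
    split_ifs <;> omega
  rw [h1]
  split_ifs with h <;> rfl

theorem sig_congr (f f' : ℕ → Polynomial ℝ) (j g) (h : ∀ i < j, f i = f' i) :
    sig f j g = sig f' j g := by
  unfold sig
  congr 1
  funext i
  split_ifs with hi
  · exact h _ hi
  · rfl

theorem tau_congr (f f' : ℕ → Polynomial ℝ) (j) (h : ∀ i < j, f i = f' i) :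
    tau f j = tau f' j := by
  unfold tau lMinor
  congr 1
  ext1 i c
  simp [wF, h c c.2]

/-- The Jacobi identity for Wronskians. -/
theorem tau_mul_sig (f : ℕ → Polynomial ℝ) (j : ℕ) (g : Polynomial ℝ) (h : tau f j ≠ 0) :
    tau f j * sig f (j+1) g = tau f (j+1) * derivative (sig f j g)
      - derivative (tau f (j+1)) * sig f j g := by
  let f' : ℕ → Polynomial ℝ := fun i => if i < j + 1 then f i else g
  have hf : ∀ i < j + 1, f i = f' i := fun i hi => (if_pos hi).symm
  have hg : g = f' (j+1) := by simp [f']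
  rw [sig_congr f f' (j+1) g hf, sig_congr f f' j g (fun i hi => hf i (by omega)),
    tau_congr f f' j (fun i hi => hf i (by omega)), tau_congr f f' (j+1) hf, hg, sig_self]
  rw [tau_congr f f' j (fun i hi => hf i (by omega))] at h
  have := lMinor_mul (wF f') j h
  rw [← sig_self f' j, ← bMinor_eq_sig, ← bMinor_eq_sig, derivative_bMinor, derivative_bMinor]
  exact this

theorem physHermite_ode_aux (n : ℕ) :
    derivative (derivative (physHermite n)) = 2 * X * derivative (physHermite n)
      - C (2 * (n : ℝ)) * physHermite n ∧
    derivative (physHermite (n+1)) = C (2 * (n : ℝ) + 2) * physHermite n := by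
  induction n with
  | zero =>
    simp [physHermite]
    exact (map_ofNat C 2).symm
  | succ n ih =>
    obtain ⟨h1, h2⟩ := ih
    have h0 : physHermite (n+1) = 2 * X * physHermite n - derivative (physHermite n) := rfl
    have h3 : derivative (derivative (physHermite (n+1))) = 2 * X * derivative (physHermite (n+1))
      - C (2 * ((n+1 : ℕ) : ℝ)) * physHermite (n+1) := by
      rw [h2, derivative_C_mul]
      push_cast
      simp only [map_add, map_mul, map_one] 
      rw [h0]
      simp only [map_ofNat]
      ring
    refine ⟨h3, ?_⟩
    have h4 : physHermite (n+1+1) = 2 * X * physHermite (n+1) - derivative (physHermite (n+1)) := rfl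
    rw [h4, derivative_sub, h3]
    push_cast
    simp only [map_add, map_mul, map_one, map_ofNat, derivative_mul, derivative_ofNat, derivative_X]
    ring

theorem physHermite_ode (n : ℕ) :
    derivative (derivative (physHermite n)) = 2 * X * derivative (physHermite n)
      - C (2 * (n : ℝ)) * physHermite n := (physHermite_ode_aux n).1

theorem physHermite_natDegree (n : ℕ) :
    (physHermite n).natDegree = n ∧ physHermite n ≠ 0 := by
  induction n with
  | zero => simp [physHermite]
  | succ n ih =>
    obtain ⟨h1, h2⟩ := ih
    have h0 : physHermite (n+1) = 2 * X * physHermite n - derivative (physHermite n) := rfl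
    have h3 : (2 * X * physHermite n).natDegree = n + 1 := by
      have : (2 * X * physHermite n) = C 2 * (X * physHermite n) := by
        simp only [map_ofNat]; ring
      rw [this, natDegree_C_mul (by norm_num), natDegree_X_mul h2, h1]
    have h4 : (physHermite (n+1)).natDegree = n + 1 := by
      rw [h0, natDegree_sub_eq_left_of_natDegree_lt, h3]
      rw [h3]
      have := natDegree_derivative_le (physHermite n)
      omega
    refine ⟨h4, ?_⟩
    intro h
    rw [h] at h4
    simp at h4

theorem physHermite_comp_neg (n : ℕ) :
    (physHermite n).comp (-X) = (-1) ^ n * physHermite n := by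
  induction n with
  | zero => simp [physHermite]
  | succ n ih =>
    have h0 : physHermite (n+1) = 2 * X * physHermite n - derivative (physHermite n) := rfl
    have h1 : (derivative (physHermite n)).comp (-X)
      = - ((-1) ^ n * derivative (physHermite n)) := by
      have := congrArg derivative ih
      rw [derivative_comp] at this
      have h2 : ((-1 : Polynomial ℝ)) ^ n = C ((-1) ^ n) := by simp
      rw [h2, derivative_C_mul, ← h2] at this
      simp only [derivative_neg, derivative_X] at this
      linear_combination -this
    rw [h0, sub_comp, mul_comp, mul_comp, ih, h1]
    simp only [X_comp, ofNat_comp]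
    ring

theorem iter_physHermite_eval_neg (i n : ℕ) (x : ℝ) :
    ((fun p => derivative p)^[i] (physHermite n)).eval (-x)
      = (-1) ^ i * ((-1) ^ n * ((fun p => derivative p)^[i] (physHermite n)).eval x) := by
  have key : ((fun p => derivative p)^[i] (physHermite n)).comp (-X)
      = C ((-1) ^ i * (-1) ^ n) * ((fun p => derivative p)^[i] (physHermite n)) := by
    induction i with
    | zero => simp [physHermite_comp_neg]
    | succ i ih =>
      have := congrArg derivative ih
      rw [derivative_comp, derivative_C_mul] at this
      simp only [derivative_neg, derivative_X] at this
      rw [Function.iterate_succ_apply']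
      have h2 : C ((-1 : ℝ) ^ (i+1) * (-1) ^ n) = - C ((-1 : ℝ) ^ i * (-1) ^ n) := by
        rw [← C_neg]; congr 1; ring
      rw [h2]
      linear_combination -this
  have := congrArg (eval x) key
  rw [eval_comp, eval_mul, eval_C] at this
  simp only [eval_neg, eval_X] at this
  rw [this]; ring

theorem tau_eval_neg (k : ℕ → ℕ) (j : ℕ) (x : ℝ) :
    (tau (fun i => physHermite (k i)) j).eval (-x) =
      (∏ i ∈ Finset.range j, (-1 : ℝ) ^ (i + k i)) *
        (tau (fun i => physHermite (k i)) j).eval x := by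
  unfold tau lMinor
  rw [← coe_evalRingHom, ← coe_evalRingHom, RingHom.map_det, RingHom.map_det]
  have : (RingHom.mapMatrix (evalRingHom (-x)))
      (Matrix.of fun i c : Fin j => wF (fun i => physHermite (k i)) i c)
      = Matrix.of fun i c : Fin j => (-1 : ℝ) ^ (i : ℕ) * (Matrix.of (fun i c : Fin j =>
        (-1 : ℝ) ^ (k c) * (RingHom.mapMatrix (evalRingHom x))
      (Matrix.of fun i c : Fin j => wF (fun i => physHermite (k i)) i c) i c)) i c := by
    ext i c
    simp only [RingHom.mapMatrix_apply, Matrix.map_apply, Matrix.of_apply, coe_evalRingHom, wF]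
    exact iter_physHermite_eval_neg i (k c) x
  rw [this, Matrix.det_mul_column (fun i : Fin j => (-1 : ℝ) ^ (i : ℕ)),
    Matrix.det_mul_row (fun c : Fin j => (-1 : ℝ) ^ (k c)), ← mul_assoc, ← Finset.prod_mul_distrib]
  congr 1
  rw [Finset.prod_range]
  refine Finset.prod_congr rfl fun i _ => ?_
  rw [pow_add]

theorem wr_degree (p q : Polynomial ℝ) (hp : p ≠ 0) (hq : q ≠ 0)
    (h : p.natDegree ≠ q.natDegree) :
    p * derivative q - derivative p * q ≠ 0 ∧
      (p * derivative q - derivative p * q).natDegree + 1 = p.natDegree + q.natDegree := by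
  have key : ∀ p q : Polynomial ℝ, p.natDegree + q.natDegree ≠ 0 →
      (p * derivative q).coeff (p.natDegree + q.natDegree - 1)
        = p.leadingCoeff * q.leadingCoeff * q.natDegree ∧
      (p * derivative q).natDegree ≤ p.natDegree + q.natDegree - 1 := by
    intro p q h
    by_cases hq : q.natDegree = 0
    · have : derivative q = 0 := by
        rw [eq_C_of_natDegree_eq_zero hq]; simp
      simp [this, hq]
    · have h1 := natDegree_derivative_le q
      constructor
      · have h2 : p.natDegree + q.natDegree - 1 = p.natDegree + (q.natDegree - 1) := by omega
        rw [h2, coeff_mul_add_eq_of_natDegree_le le_rfl h1, coeff_derivative]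
        have h3 : q.natDegree - 1 + 1 = q.natDegree := by omega
        rw [h3]
        have h4 : ((q.natDegree - 1 : ℕ) : ℝ) + 1 = q.natDegree := by
          exact_mod_cast h3
        rw [h4, leadingCoeff, leadingCoeff]; ring
      · refine natDegree_mul_le.trans ?_
        omega
  have h0 : p.natDegree + q.natDegree ≠ 0 := by omega
  obtain ⟨h1, h2⟩ := key p q h0
  obtain ⟨h3, h4⟩ := key q p (by omega)
  rw [mul_comm q, add_comm q.natDegree] at h3 h4
  have hc : (p * derivative q - derivative p * q).coeff (p.natDegree + q.natDegree - 1) ≠ 0 := by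
    rw [coeff_sub, h1, h3]
    have h5 : (q.natDegree : ℝ) - p.natDegree ≠ 0 := by
      rw [sub_ne_zero]; exact_mod_cast h.symm
    have h6 := mul_ne_zero (mul_ne_zero (leadingCoeff_ne_zero.mpr hp) (leadingCoeff_ne_zero.mpr hq)) h5
    intro h7; apply h6; linear_combination h7
  refine ⟨fun h => hc (by rw [h]; simp), ?_⟩
  have h5 := le_natDegree_of_ne_zero hc
  have h6 := natDegree_sub_le_of_le h2 h4
  simp only [max_self] at h6
  omega

theorem deg_main (k : ℕ → ℕ) (hk : Function.Injective k) (j : ℕ) :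
    tau (fun i => physHermite (k i)) j ≠ 0 ∧ ∀ b, (∀ i < j, k i ≠ b) →
      sig (fun i => physHermite (k i)) j (physHermite b) ≠ 0 ∧
      (sig (fun i => physHermite (k i)) j (physHermite b)).natDegree + j
        = (tau (fun i => physHermite (k i)) j).natDegree + b := by
  induction j with
  | zero =>
    simp only [tau_zero, sig_zero]
    refine ⟨one_ne_zero, fun b _ => ⟨(physHermite_natDegree b).2, ?_⟩⟩
    simp [(physHermite_natDegree b).1]
  | succ j ih =>
    obtain ⟨h0, hs⟩ := ih
    obtain ⟨h1, h2⟩ := hs (k j) (fun i hi h => by have := hk h; omega)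
    rw [sig_self (fun i => physHermite (k i)) j] at h1 h2
    refine ⟨h1, fun b hb => ?_⟩
    obtain ⟨h3, h4⟩ := hs b (fun i hi => hb i (by omega))
    have hbj := hb j (by omega)
    obtain ⟨h5, h6⟩ := wr_degree _ _ h1 h3 (by omega)
    rw [← tau_mul_sig _ _ _ h0] at h5 h6
    have h7 := right_ne_zero_of_mul h5
    refine ⟨h7, ?_⟩
    rw [natDegree_mul h0 h7] at h6
    omega

theorem tau_natDegree (k : ℕ → ℕ) (hk : Function.Injective k) (j : ℕ) :
    (tau (fun i => physHermite (k i)) j).natDegree + ∑ i ∈ Finset.range j, i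
      = ∑ i ∈ Finset.range j, k i := by
  induction j with
  | zero => simp [tau_zero]
  | succ j ih =>
    have := ((deg_main k hk j).2 (k j) (fun i hi h => by have := hk h; omega)).2
    rw [sig_self (fun i => physHermite (k i)) j] at this
    rw [Finset.sum_range_succ, Finset.sum_range_succ]
    omega

theorem hirota_main (k : ℕ → ℕ) (hk : Function.Injective k) (j : ℕ) (b : ℕ) :
    let τ := tau (fun i => physHermite (k i)) j
    let σ := sig (fun i => physHermite (k i)) j (physHermite b)
    τ * derivative (derivative σ) - 2 * derivative τ * derivative σ + derivative (derivative τ) * σ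
      - 2 * X * (τ * derivative σ - derivative τ * σ) + C (2 * ((b : ℝ) - j)) * (τ * σ) = 0 := by
  induction j generalizing b with
  | zero =>
    simp only [tau_zero, sig_zero]
    rw [physHermite_ode b]
    simp
  | succ j ih =>
    have ha := ih (k j)
    have hb := ih b
    simp only [] at ha hb ⊢
    rw [sig_self (fun i => physHermite (k i)) j] at ha
    have h0 := (deg_main k hk j).1
    have hA := tau_mul_sig (fun i => physHermite (k i)) j (physHermite b) h0
    generalize tau (fun i => physHermite (k i)) j = τ at *
    generalize tau (fun i => physHermite (k i)) (j+1) = σa at *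
    generalize sig (fun i => physHermite (k i)) j (physHermite b) = σb at *
    generalize sig (fun i => physHermite (k i)) (j+1) (physHermite b) = ρ at *
    have hA' := congrArg derivative hA
    simp only [derivative_mul, derivative_sub] at hA'
    have hB : τ * derivative ρ - derivative τ * ρ - 2 * X * τ * ρ
        - C (2 * ((k j : ℝ) - b)) * σa * σb = 0 := by
      apply mul_left_cancel₀ h0
      simp only [map_mul, map_sub, map_ofNat] at ha hb ⊢
      linear_combination σa * hb - σb * ha + τ * hA' - (2 * derivative τ + 2 * X * τ) * hA
    have hB' := congrArg derivative hB
    simp only [derivative_mul, derivative_sub, derivative_C, derivative_X, derivative_ofNat,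
      derivative_zero] at hB'
    apply mul_left_cancel₀ h0
    push_cast
    simp only [map_mul, map_sub, map_add, map_one, map_ofNat] at ha hb hB hB' ⊢
    linear_combination ρ * ha + σa * hB' - 2 * derivative σa * hB + 2 * (C (k j : ℝ) - C (b : ℝ)) * σa * (-hA)

theorem bilinear_main (k : ℕ → ℕ) (hk : Function.Injective k) (j : ℕ) (b : ℕ) :
    let τ := tau (fun i => physHermite (k i)) j
    let σa := tau (fun i => physHermite (k i)) (j+1)
    let σb := sig (fun i => physHermite (k i)) j (physHermite b)
    let ρ := sig (fun i => physHermite (k i)) (j+1) (physHermite b)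
    τ * derivative ρ - derivative τ * ρ - 2 * X * τ * ρ
        = C (2 * ((k j : ℝ) - b)) * (σa * σb) := by
  have ha := hirota_main k hk j (k j)
  have hb := hirota_main k hk j b
  simp only [] at ha hb ⊢
  rw [sig_self (fun i => physHermite (k i)) j] at ha
  have h0 := (deg_main k hk j).1
  have hA := tau_mul_sig (fun i => physHermite (k i)) j (physHermite b) h0
  generalize tau (fun i => physHermite (k i)) j = τ at *
  generalize tau (fun i => physHermite (k i)) (j+1) = σa at *
  generalize sig (fun i => physHermite (k i)) j (physHermite b) = σb at *
  generalize sig (fun i => physHermite (k i)) (j+1) (physHermite b) = ρ at *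
  have hA' := congrArg derivative hA
  simp only [derivative_mul, derivative_sub] at hA'
  apply mul_left_cancel₀ h0
  simp only [map_mul, map_sub, map_ofNat] at ha hb ⊢
  linear_combination σa * hb - σb * ha + τ * hA' - (2 * derivative τ + 2 * X * τ) * hA

theorem no_common_root (τ a s ρ : Polynomial ℝ) (c x : ℝ)
    (hA : τ * ρ = a * derivative s - derivative a * s)
    (hB : τ * derivative ρ - derivative τ * ρ - 2 * X * τ * ρ = C c * (a * s))
    (ha : a.eval x ≠ 0) (hρ : ρ.eval x ≠ 0) (hτ0 : τ ≠ 0) (hs0 : s ≠ 0)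
    (h1 : τ.eval x = 0) (h2 : s.eval x = 0) : False := by
  have cop : ∀ q p : Polynomial ℝ, ∀ n, q.eval x ≠ 0 → (X - C x) ^ n ∣ p * q → (X - C x) ^ n ∣ p := by
    intro q p n hq h
    have : IsCoprime ((X - C x) ^ n) q := by
      apply IsCoprime.pow_left
      rw [(irreducible_X_sub_C x).coprime_iff_not_dvd, dvd_iff_isRoot]
      exact hq
    exact this.dvd_of_dvd_mul_right h
  have key : ∀ p : Polynomial ℝ, p ≠ 0 → p.eval x = 0 →
      ¬ (X - C x) ^ (p.rootMultiplicity x) ∣ derivative p := by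
    intro p hp hx hd
    have h3 := derivative_rootMultiplicity_of_root (p := p) (t := x) hx
    have h4 : 0 < p.rootMultiplicity x := (rootMultiplicity_pos hp).mpr hx
    have hd0 : derivative p ≠ 0 := by
      intro h
      have := derivative_eq_zero.mp h
      rw [eq_C_of_natDegree_eq_zero this] at hx hp
      simp at hx
      rw [hx] at hp
      simp at hp
    have := (le_rootMultiplicity_iff hd0).mpr hd
    omega
  have hτ := pow_rootMultiplicity_dvd τ x
  have hs := pow_rootMultiplicity_dvd s x
  rcases le_total (τ.rootMultiplicity x) (s.rootMultiplicity x) with h | h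
  · apply key τ hτ0 h1
    apply cop ρ _ _ hρ
    have hs' := (pow_dvd_pow (X - C x) h).trans hs
    have : derivative τ * ρ = τ * (derivative ρ - 2 * X * ρ) - s * (C c * a) := by
      linear_combination -hB
    rw [this]
    exact dvd_sub (hτ.mul_right _) (hs'.mul_right _)
  · apply key s hs0 h2
    apply cop a _ _ ha
    have hτ' := (pow_dvd_pow (X - C x) h).trans hτ
    have : derivative s * a = τ * ρ + s * derivative a := by
      linear_combination -hA
    rw [this]
    exact dvd_add (hτ'.mul_right _) (hs.mul_right _)

theorem nonvanish_step (τ a s ρ : Polynomial ℝ) (c : ℝ) (hc : c < 0)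
    (hA : τ * ρ = a * derivative s - derivative a * s)
    (hB : τ * derivative ρ - derivative τ * ρ - 2 * X * τ * ρ = C c * (a * s))
    (ha : ∀ x, a.eval x ≠ 0) (hρ : ∀ x, ρ.eval x ≠ 0) (hτ0 : τ ≠ 0) (hs0 : s ≠ 0)
    (heven : ∀ x, τ.eval (-x) = τ.eval x) (x : ℝ) : τ.eval x ≠ 0 := by
  have pos : ∀ x : ℝ, 0 < x → τ.eval x ≠ 0 := by
    intro x hx h0
    let F : ℝ → ℝ := fun x => Real.exp (x^2) * ((τ.eval x * s.eval x) / (ρ.eval x * a.eval x))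
    have hF : ∀ x, HasDerivAt F (Real.exp (x^2) *
        ((-c * (a.eval x * s.eval x)^2 + (τ.eval x * ρ.eval x)^2) / (ρ.eval x * a.eval x)^2)) x := by
      intro x
      have e1 : HasDerivAt (fun x : ℝ => Real.exp (x^2)) (Real.exp (x^2) * (2 * x)) x := by
        simpa using (hasDerivAt_pow 2 x).exp
      have e2 := ((τ.hasDerivAt x).mul (s.hasDerivAt x)).div ((ρ.hasDerivAt x).mul (a.hasDerivAt x))
        (mul_ne_zero (hρ x) (ha x))
      refine (e1.mul e2).congr_deriv ?_
      have hA' := congrArg (eval x) hA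
      have hB' := congrArg (eval x) hB
      simp only [eval_mul, eval_sub, eval_C, eval_X, eval_ofNat] at hA' hB'
      have := hρ x
      have := ha x
      simp only [Pi.mul_apply, Pi.div_apply]
      field_simp
      linear_combination (- eval x a * eval x s) * hB' - (eval x τ * eval x ρ) * hA'
    have hmono : Monotone F := by
      apply monotone_of_hasDerivAt_nonneg hF
      intro x
      have : 0 < -c := by linarith
      positivity
    have hz1 : F x = 0 := by simp [F, h0]
    have hz2 : F (-x) = 0 := by simp [F, h0, heven]
    have hroots : Set.Icc (-x) x ⊆ {y | (τ * s).IsRoot y} := by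
      intro y hy
      have h1 := hmono hy.1
      have h2 := hmono hy.2
      have h3 : F y = 0 := by linarith
      have h4 := hρ y
      have h5 := ha y
      have h6 := Real.exp_ne_zero (y^2)
      simp only [F, mul_eq_zero, div_eq_zero_iff, h6, h4, h5, or_false, false_or] at h3
      simpa [IsRoot] using h3
    have hinf : (Set.Icc (-x) x).Infinite := Set.Icc_infinite (by linarith)
    have := eq_zero_of_infinite_isRoot _ (hinf.mono hroots)
    exact (mul_ne_zero hτ0 hs0) this
  rcases lt_trichotomy x 0 with h | h | h
  · rw [← heven]; exact pos _ (by linarith)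
  · subst h
    intro h0
    have hd : (derivative τ).eval 0 = 0 := by
      have h1 := τ.hasDerivAt 0
      have h2 : HasDerivAt (fun x => τ.eval (-x)) (-(derivative τ).eval 0) 0 := by
        have h1' : HasDerivAt (fun x => τ.eval x) ((derivative τ).eval 0) (-0) := by simpa using h1
        exact (HasDerivAt.comp (0:ℝ) h1' (hasDerivAt_neg (0:ℝ))).congr_deriv (by ring)
      have h3 : (fun x => τ.eval (-x)) = fun x => τ.eval x := funext heven
      rw [h3] at h2
      have := h1.unique h2
      linarith
    have hB' := congrArg (eval 0) hB
    simp only [eval_mul, eval_sub, eval_C, eval_X, eval_ofNat, h0, hd] at hB'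
    have h4 : s.eval 0 = 0 := by
      have := ha 0
      have h5 : c * (a.eval 0 * s.eval 0) = 0 := by linarith
      simpa [hc.ne, this] using h5
    exact no_common_root τ a s ρ c 0 hA hB (ha 0) (hρ 0) hτ0 hs0 h0 h4
  · exact pos _ h

theorem simple_step (τ a s ρ : Polynomial ℝ) (c : ℝ)
    (hA : τ * ρ = a * derivative s - derivative a * s)
    (hB : τ * derivative ρ - derivative τ * ρ - 2 * X * τ * ρ = C c * (a * s))
    (hτ : ∀ x, τ.eval x ≠ 0)
    (hsimp : ∀ x, ρ.eval x = 0 → (derivative ρ).eval x ≠ 0) (x : ℝ) (hx : s.eval x = 0) :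
    (derivative s).eval x ≠ 0 := by
  intro hd
  have hA' := congrArg (eval x) hA
  have hB' := congrArg (eval x) hB
  simp only [eval_mul, eval_sub, eval_C, eval_X, eval_ofNat, hx, hd] at hA' hB'
  have h1 : ρ.eval x = 0 := by simpa [hτ x] using hA'
  rw [h1] at hB'
  apply hsimp x h1
  simpa [hτ x] using hB'

theorem upper_step (τ a s ρ : Polynomial ℝ)
    (hA : τ * ρ = a * derivative s - derivative a * s)
    (hτ : ∀ x, τ.eval x ≠ 0) (ha : ∀ x, a.eval x ≠ 0) (hρ0 : ρ ≠ 0) :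
    s.roots.toFinset.card ≤ ρ.roots.toFinset.card + 1 := by
  apply Finset.card_le_of_interleaved
  intro x hx y hy hxy _
  have hx0 : s.eval x = 0 := by
    simp only [Multiset.mem_toFinset] at hx; exact isRoot_of_mem_roots hx
  have hy0 : s.eval y = 0 := by
    simp only [Multiset.mem_toFinset] at hy; exact isRoot_of_mem_roots hy
  have hd : ∀ z, HasDerivAt (fun z => s.eval z / a.eval z)
      (τ.eval z * ρ.eval z / (a.eval z)^2) z := by
    intro z
    refine ((s.hasDerivAt z).div (a.hasDerivAt z) (ha z)).congr_deriv ?_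
    have hA' := congrArg (eval z) hA
    simp only [eval_mul, eval_sub] at hA'
    rw [hA']; ring
  obtain ⟨z, hz, hz0⟩ := exists_hasDerivAt_eq_zero hxy
    (fun z _ => (hd z).continuousAt.continuousWithinAt) (by simp [hx0, hy0]) (fun z _ => hd z)
  refine ⟨z, ?_, hz.1, hz.2⟩
  rw [Multiset.mem_toFinset, mem_roots hρ0]
  simpa [ha z, hτ z] using hz0

theorem gauss_tendsto_atTop (p q : Polynomial ℝ) (hq : q ≠ 0) :
    Filter.Tendsto (fun x : ℝ => Real.exp (-x^2) * (p.eval x / q.eval x)) Filter.atTop (nhds 0) := by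
  have h1 : Filter.Tendsto (fun x : ℝ => ((p.comp X).eval x) / Real.exp x) Filter.atTop (nhds 0) := by
    simpa using p.tendsto_div_exp_atTop
  have hO : (fun x => p.eval x) =O[Filter.atTop] (fun x => (X ^ p.natDegree * q).eval x) := by
    apply isBigO_atTop_of_degree_le
    rw [degree_mul, degree_pow, degree_X]
    have : 0 ≤ q.degree := zero_le_degree_iff.mpr hq
    calc p.degree ≤ (p.natDegree : WithBot ℕ) := degree_le_natDegree
      _ = (p.natDegree : WithBot ℕ) + 0 := by simp
      _ ≤ _ := by simpa using add_le_add_right this _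
  have hO2 : (fun x => Real.exp (-x^2) * (p.eval x / q.eval x)) =O[Filter.atTop]
      (fun x => ((X : Polynomial ℝ) ^ p.natDegree).eval x / Real.exp x) := by
    have e1 : (fun x : ℝ => Real.exp (-x^2)) =O[Filter.atTop] (fun x : ℝ => (Real.exp x)⁻¹) := by
      apply Asymptotics.IsBigO.of_bound 1
      filter_upwards [Filter.eventually_ge_atTop (1:ℝ)] with x hx
      rw [← Real.exp_neg, Real.norm_eq_abs, Real.norm_eq_abs, Real.abs_exp, Real.abs_exp, one_mul]
      apply Real.exp_le_exp.mpr
      nlinarith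
    have e2 : (fun x : ℝ => p.eval x / q.eval x) =O[Filter.atTop]
        (fun x => ((X : Polynomial ℝ) ^ p.natDegree).eval x) := by
      obtain ⟨K, hK⟩ := hO.bound
      apply Asymptotics.IsBigO.of_bound K
      have hne : ∀ᶠ x in Filter.atTop, q.eval x ≠ 0 := by
        have := q.eventually_atTop_not_isRoot hq
        simpa [IsRoot] using this
      filter_upwards [hK, hne] with x hx hx0
      rw [norm_div, div_le_iff₀ (norm_pos_iff.mpr hx0)]
      rw [eval_mul, norm_mul] at hx
      linarith
    refine (e1.mul e2).congr (fun _ => rfl) (fun x => ?_)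
    rw [div_eq_mul_inv, mul_comm]
  exact hO2.trans_tendsto (X ^ p.natDegree : Polynomial ℝ).tendsto_div_exp_atTop

theorem gauss_tendsto (p q : Polynomial ℝ) (hq : q ≠ 0) :
    Filter.Tendsto (fun x : ℝ => Real.exp (-x^2) * (p.eval x / q.eval x))
      (Filter.cocompact ℝ) (nhds 0) := by
  rw [cocompact_eq_atBot_atTop]
  apply Filter.Tendsto.sup _ (gauss_tendsto_atTop p q hq)
  have hq' : q.comp (-X) ≠ 0 := by
    intro h
    apply hq
    have := congrArg (fun r => r.comp (-X)) h
    simpa [comp_assoc] using this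
  have := (gauss_tendsto_atTop (p.comp (-X)) (q.comp (-X)) hq').comp Filter.tendsto_neg_atBot_atTop
  refine this.congr (fun x => ?_)
  simp

/-- Rolle's theorem on an open set for a function vanishing on the frontier and at infinity. -/
theorem rolle_open (G G' : ℝ → ℝ) (hG : ∀ x, HasDerivAt G (G' x) x)
    (hlim : Filter.Tendsto G (Filter.cocompact ℝ) (nhds 0)) (O : Set ℝ) (hO : IsOpen O)
    (hfr : ∀ x ∈ frontier O, G x = 0) (x₁ : ℝ) (hx₁ : x₁ ∈ O) (h1 : G x₁ ≠ 0) :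
    ∃ z ∈ O, G' z = 0 := by
  have hcont : Continuous G := continuous_iff_continuousAt.mpr fun x => (hG x).continuousAt
  have hpos : 0 < (G x₁)^2 := by positivity
  obtain ⟨z, hz, hmax⟩ := ContinuousOn.exists_isMaxOn' (f := fun x => (G x)^2) (s := closure O)
    (hcont.pow 2).continuousOn isClosed_closure (subset_closure hx₁) (by
      have : Filter.Tendsto (fun x => (G x)^2) (Filter.cocompact ℝ) (nhds 0) := by
        simpa using hlim.pow 2
      exact ((this.eventually_lt_const hpos).mono fun x hx => hx.le).filter_mono inf_le_left)
  have hzpos : 0 < (G z)^2 := lt_of_lt_of_le hpos (hmax (subset_closure hx₁))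
  have hzO : z ∈ O := by
    by_contra h
    have : z ∈ frontier O := by rw [hO.frontier_eq]; exact ⟨hz, h⟩
    rw [hfr z this] at hzpos
    simp at hzpos
  have hloc : IsLocalMax (fun x => (G x)^2) z :=
    (hmax.on_subset subset_closure).isLocalMax (hO.mem_nhds hzO)
  have := hloc.hasDerivAt_eq_zero ((hG z).pow 2)
  have hne : G z ≠ 0 := by intro h; rw [h] at hzpos; simp at hzpos
  refine ⟨z, hzO, ?_⟩
  simpa [hne] using this

theorem lower_step (τ a s ρ : Polynomial ℝ) (c : ℝ) (hc : c ≠ 0)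
    (hB : τ * derivative ρ - derivative τ * ρ - 2 * X * τ * ρ = C c * (a * s))
    (hτ : ∀ x, τ.eval x ≠ 0) (ha : ∀ x, a.eval x ≠ 0) (hs0 : s ≠ 0) (hρ0 : ρ ≠ 0) :
    ρ.roots.toFinset.card + 1 ≤ s.roots.toFinset.card := by
  have hτ0 : τ ≠ 0 := by rintro rfl; simpa using hτ 0
  let G : ℝ → ℝ := fun x => Real.exp (-x^2) * (ρ.eval x / τ.eval x)
  let G' : ℝ → ℝ := fun x => Real.exp (-x^2) * (c * (a.eval x * s.eval x) / (τ.eval x)^2)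
  have hG : ∀ x, HasDerivAt G (G' x) x := by
    intro x
    have e1 : HasDerivAt (fun x : ℝ => Real.exp (-x^2)) (Real.exp (-x^2) * (-(2 * x))) x := by
      simpa using (hasDerivAt_pow 2 x).neg.exp
    refine (e1.mul ((ρ.hasDerivAt x).div (τ.hasDerivAt x) (hτ x))).congr_deriv ?_
    have hB' := congrArg (eval x) hB
    simp only [eval_mul, eval_sub, eval_C, eval_X, eval_ofNat] at hB'
    have := hτ x
    simp only [G']
    rw [← hB']
    simp only [Pi.div_apply]
    field_simp
    ring
  have hlim := gauss_tendsto ρ τ hτ0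
  have hmemS : ∀ z, G' z = 0 → z ∈ s.roots.toFinset := by
    intro z hz
    rw [Multiset.mem_toFinset, mem_roots hs0]
    simpa [G', hc, ha z, hτ z] using hz
  have hzero : ∀ z ∈ ρ.roots.toFinset, G z = 0 := by
    intro z hz
    rw [Multiset.mem_toFinset, mem_roots hρ0] at hz
    simp [G, show ρ.eval z = 0 from hz]
  have hR : ∀ O : Set ℝ, IsOpen O → (∀ x ∈ frontier O, G x = 0) → O.Nonempty →
      ∃ z ∈ s.roots.toFinset, z ∈ O := by
    intro O hO hfr hne
    have hinf : O.Infinite := by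
      obtain ⟨y, hy⟩ := hne
      exact infinite_of_mem_nhds y (hO.mem_nhds hy)
    obtain ⟨x₁, hx₁, hx₁'⟩ := hinf.exists_notMem_finset ρ.roots.toFinset
    have h1 : G x₁ ≠ 0 := by
      intro h
      apply hx₁'
      rw [Multiset.mem_toFinset, mem_roots hρ0]
      simpa [G, hτ x₁] using h
    obtain ⟨z, hz, hz0⟩ := rolle_open G G' hG hlim O hO hfr x₁ hx₁ h1
    exact ⟨z, hmemS z hz0, hz⟩
  obtain ⟨B, hBb⟩ := ((ρ.roots.toFinset ∪ s.roots.toFinset).finite_toSet).bddAbove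
  obtain ⟨A, hAb⟩ := ((ρ.roots.toFinset ∪ s.roots.toFinset).finite_toSet).bddBelow
  have hB1 : ∀ z, z ∈ ρ.roots.toFinset ∨ z ∈ s.roots.toFinset → z < B + 1 := by
    intro z hz
    have := hBb (show z ∈ ((ρ.roots.toFinset ∪ s.roots.toFinset : Finset ℝ) : Set ℝ) by
      rw [Finset.mem_coe, Finset.mem_union]; exact hz)
    linarith
  have hA1 : ∀ z, z ∈ ρ.roots.toFinset ∨ z ∈ s.roots.toFinset → A - 1 < z := by
    intro z hz
    have := hAb (show z ∈ ((ρ.roots.toFinset ∪ s.roots.toFinset : Finset ℝ) : Set ℝ) by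
      rw [Finset.mem_coe, Finset.mem_union]; exact hz)
    linarith
  obtain ⟨z₀, hz₀, -⟩ := hR Set.univ isOpen_univ (by simp) Set.univ_nonempty
  have hAB : A - 1 < B + 1 := (hA1 z₀ (Or.inr hz₀)).trans (hB1 z₀ (Or.inr hz₀))
  have hcard : (insert (A-1) (insert (B+1) ρ.roots.toFinset)).card = ρ.roots.toFinset.card + 2 := by
    rw [Finset.card_insert_of_notMem, Finset.card_insert_of_notMem]
    · intro h; exact lt_irrefl _ (hB1 _ (Or.inl h))
    · rw [Finset.mem_insert]
      rintro (h | h)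
      · linarith
      · exact lt_irrefl _ (hA1 _ (Or.inl h))
  have hinter : (insert (A-1) (insert (B+1) ρ.roots.toFinset)).card ≤ s.roots.toFinset.card + 1 := by
    apply Finset.card_le_of_interleaved
    intro x hx y hy hxy _
    simp only [Finset.mem_insert] at hx hy
    have hyA : y ≠ A - 1 := by
      rintro rfl
      rcases hx with h | h | h
      · linarith
      · linarith
      · have := hA1 x (Or.inl h); linarith
    have hxB : x ≠ B + 1 := by
      rintro rfl
      rcases hy with h | h | h
      · linarith
      · linarith
      · have := hB1 y (Or.inl h); linarith
    rcases hx with rfl | h | hx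
    · rcases hy with h | rfl | hy
      · exact absurd h hyA
      · exact ⟨z₀, hz₀, hA1 z₀ (Or.inr hz₀), hB1 z₀ (Or.inr hz₀)⟩
      · obtain ⟨z, hz, hzO⟩ := hR (Set.Iio y) isOpen_Iio
          (by intro x hx; rw [frontier_Iio] at hx; rw [hx]; exact hzero y hy) ⟨y - 1, by simp⟩
        exact ⟨z, hz, hA1 z (Or.inr hz), hzO⟩
    · exact absurd h hxB
    · rcases hy with h | rfl | hy
      · exact absurd h hyA
      · obtain ⟨z, hz, hzO⟩ := hR (Set.Ioi x) isOpen_Ioi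
          (by intro y hy; rw [frontier_Ioi] at hy; rw [hy]; exact hzero x hx) ⟨x + 1, by simp⟩
        exact ⟨z, hz, hzO, hB1 z (Or.inr hz)⟩
      · obtain ⟨z, hz, hzO⟩ := hR (Set.Ioo x y) isOpen_Ioo
          (by
            intro w hw
            rw [frontier_Ioo hxy] at hw
            rcases hw with rfl | rfl
            · exact hzero _ hx
            · exact hzero _ hy) ⟨(x + y) / 2, by constructor <;> linarith⟩
        exact ⟨z, hz, hzO.1, hzO.2⟩
  omega

theorem tau_full (k : ℕ → ℕ) (hk : Function.Injective k) (m : ℕ) (hlt : ∀ i < m, k i < m) (x : ℝ) :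
    (tau (fun i => physHermite (k i)) m).eval x ≠ 0 := by
  have himg : (Finset.range m).image k = Finset.range m := by
    apply Finset.eq_of_subset_of_card_le
    · intro y hy
      simp only [Finset.mem_image, Finset.mem_range] at hy ⊢
      obtain ⟨i, hi, rfl⟩ := hy
      exact hlt i hi
    · rw [Finset.card_image_of_injective _ hk]
  have hsum : ∑ i ∈ Finset.range m, k i = ∑ i ∈ Finset.range m, i := by
    conv_rhs => rw [← himg]
    rw [Finset.sum_image (fun a _ b _ h => hk h)]
  have hd := tau_natDegree k hk m
  have h0 := (deg_main k hk m).1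
  have hz : (tau (fun i => physHermite (k i)) m).natDegree = 0 := by omega
  rw [eq_C_of_natDegree_eq_zero hz] at h0 ⊢
  simpa using h0

theorem tau_nonvanish (k : ℕ → ℕ) (hk : Function.Injective k) (r m : ℕ)
    (hkm : k m = m) (hlt : ∀ i < m, k i < m)
    (hmono : ∀ j, r ≤ j → k j < k (j + 1))
    (hpr : Even (∑ i ∈ Finset.range r, (i + k i))) (hp : ∀ j, r ≤ j → Even (j + k j)) (d : ℕ) :
    ∀ j, r ≤ j → j + d = m → (∀ x, (tau (fun i => physHermite (k i)) j).eval x ≠ 0) ∧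
      (∀ x, (tau (fun i => physHermite (k i)) (j+1)).eval x ≠ 0) := by
  have hpar : ∀ j, r ≤ j → Even (∑ i ∈ Finset.range j, (i + k i)) := by
    intro j hj
    induction j, hj using Nat.le_induction with
    | base => exact hpr
    | succ j hj ih => rw [Finset.sum_range_succ]; exact ih.add (hp j hj)
  induction d with
  | zero =>
    intro j _ hjm
    obtain rfl : j = m := by omega
    refine ⟨tau_full k hk j hlt, tau_full k hk (j+1) ?_⟩
    intro i hi
    rcases Nat.lt_succ_iff_lt_or_eq.mp hi with h | rfl
    · have := hlt i h; omega
    · omega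
  | succ d ih =>
    intro j hrj hjm
    obtain ⟨h1, h2⟩ := ih (j+1) (by omega) (by omega)
    refine ⟨?_, h1⟩
    have hA := tau_mul_sig (fun i => physHermite (k i)) j (physHermite (k (j+1))) (deg_main k hk j).1
    have hB := bilinear_main k hk j (k (j+1))
    simp only [] at hB
    rw [sig_self (fun i => physHermite (k i)) (j+1)] at hA hB
    refine nonvanish_step _ _ _ _ _ ?_ hA hB h1 h2 (deg_main k hk j).1
      ((deg_main k hk j).2 _ ?_).1 ?_
    · have : (k j : ℝ) < k (j+1) := by exact_mod_cast hmono j hrj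
      linarith
    · intro i hi h
      have := hk h
      omega
    · intro x
      rw [tau_eval_neg, Finset.prod_pow_eq_pow_sum, (hpar j hrj).neg_one_pow, one_mul]

theorem sig_zeros (k : ℕ → ℕ) (hk : Function.Injective k) (r m : ℕ)
    (hkm : k m = m) (hlt : ∀ i < m, k i < m)
    (hmono : ∀ j, r ≤ j → k j < k (j + 1))
    (hpr : Even (∑ i ∈ Finset.range r, (i + k i))) (hp : ∀ j, r ≤ j → Even (j + k j)) (d : ℕ) :
    ∀ j, r ≤ j → j + d = m →
      (sig (fun i => physHermite (k i)) j (physHermite m)).roots.toFinset.card = d ∧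
      ∀ x, (sig (fun i => physHermite (k i)) j (physHermite m)).eval x = 0 →
        (derivative (sig (fun i => physHermite (k i)) j (physHermite m))).eval x ≠ 0 := by
  induction d with
  | zero =>
    intro j hrj hjm
    obtain rfl : j = m := by omega
    have h1 := (tau_nonvanish k hk r j hkm hlt hmono hpr hp 0 j hrj rfl).2
    have h2 := sig_self (fun i => physHermite (k i)) j
    simp only [hkm] at h2
    rw [h2]
    refine ⟨?_, fun x hx => absurd hx (h1 x)⟩
    rw [Finset.card_eq_zero, Finset.eq_empty_iff_forall_notMem]
    intro x hx
    rw [Multiset.mem_toFinset] at hx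
    exact h1 x (isRoot_of_mem_roots hx)
  | succ d ih =>
    intro j hrj hjm
    obtain ⟨i1, i2⟩ := ih (j+1) (by omega) (by omega)
    obtain ⟨h1, h2⟩ := tau_nonvanish k hk r m hkm hlt hmono hpr hp (d+1) j hrj hjm
    have hA := tau_mul_sig (fun i => physHermite (k i)) j (physHermite m) (deg_main k hk j).1
    have hB := bilinear_main k hk j m
    simp only [] at hB
    have hne : ∀ j ≤ m, sig (fun i => physHermite (k i)) j (physHermite m) ≠ 0 := by
      intro j hj
      apply ((deg_main k hk j).2 _ _).1
      intro i hi
      have := hlt i (by omega)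
      omega
    refine ⟨?_, simple_step _ _ _ _ _ hA hB h1 i2⟩
    have hc : (2 * ((k j : ℝ) - m)) ≠ 0 := by
      have : (k j : ℝ) < m := by exact_mod_cast hlt j (by omega)
      intro h
      linarith
    have hU := upper_step _ _ _ _ hA h1 h2 (hne (j+1) (by omega))
    have hL := lower_step _ _ _ _ _ hc hB h1 h2 (hne j (by omega)) (hne (j+1) (by omega))
    omega

theorem even_count (s : ℕ → ℕ) (R a : ℕ) (hs : ∀ t < R, s (2*t+1) = s (2*t) + 1)
    (ha : ∀ i < 2 * R, s i ≠ a) : Even ((Finset.range (2*R)).filter (fun i => s i < a)).card := by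
  induction R with
  | zero => simp
  | succ R ih =>
    have ih := ih (fun t ht => hs t (by omega)) (fun i hi => ha i (by omega))
    have h1 := hs R (by omega)
    have h2 := ha (2*R+1) (by omega)
    rw [show 2 * (R+1) = 2*R+1+1 by ring, Finset.range_add_one, Finset.range_add_one,
      Finset.filter_insert, Finset.filter_insert]
    by_cases h : s (2*R) < a
    · have h3 : s (2*R+1) < a := by omega
      rw [if_pos h, if_pos h3, Finset.card_insert_of_notMem, Finset.card_insert_of_notMem]
      · rw [add_assoc]; exact ih.add (by decide)
      · simp
      · simp
    · have h3 : ¬ s (2*R+1) < a := by omega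
      rw [if_neg h, if_neg h3]
      exact ih

theorem even_sum (s : ℕ → ℕ) (R : ℕ) (hs : ∀ t < R, s (2*t+1) = s (2*t) + 1) :
    Even (∑ i ∈ Finset.range (2*R), (i + s i)) := by
  induction R with
  | zero => simp
  | succ R ih =>
    have ih := ih (fun t ht => hs t (by omega))
    have h1 := hs R (by omega)
    rw [show 2 * (R+1) = 2*R+1+1 by ring, Finset.sum_range_succ, Finset.sum_range_succ, h1, add_assoc]
    refine ih.add ⟨2 * R + s (2*R) + 1, by ring⟩

open scoped Classical in
theorem exists_seq (s : ℕ → ℕ) (R m : ℕ) (hs : ∀ t < R, s (2*t+1) = s (2*t) + 1)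
    (hmono : ∀ i j, i < j → j < 2 * R → s i < s j) (hm : ∀ i < 2 * R, s i < m) :
    ∃ k : ℕ → ℕ, (∀ i < 2 * R, k i = s i) ∧ Function.Injective k ∧ 2 * R ≤ m ∧ k m = m ∧
      (∀ i < m, k i < m) ∧ (∀ j, 2 * R ≤ j → k j < k (j + 1)) ∧
      ∀ j, 2 * R ≤ j → Even (j + k j) := by
  let p : ℕ → Prop := fun a => ∀ i < 2 * R, s i ≠ a
  have hinf : (Set.ofPred p).Infinite := by
    have h1 : ((Finset.range (2*R)).image s : Set ℕ).Finite := Finset.finite_toSet _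
    refine h1.infinite_compl.mono ?_
    intro a ha i hi h
    apply ha
    simp only [Finset.coe_image, Set.mem_image, Finset.mem_coe, Finset.mem_range]
    exact ⟨i, hi, h⟩
  have hsinj : ∀ i < 2 * R, ∀ j < 2 * R, s i = s j → i = j := by
    intro i hi j hj h
    rcases lt_trichotomy i j with h1 | h1 | h1
    · have := hmono i j h1 hj; omega
    · exact h1
    · have := hmono j i h1 hi; omega
  have hcount : ∀ a, Nat.count p a + ((Finset.range (2*R)).filter (fun i => s i < a)).card = a := by
    intro a
    rw [Nat.count_eq_card_filter_range]
    have h1 : ((Finset.range (2*R)).filter (fun i => s i < a)).card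
        = ((Finset.range a).filter (fun x => ¬ p x)).card := by
      rw [← Finset.card_image_of_injOn (f := s)]
      · congr 1
        ext y
        simp only [Finset.mem_image, Finset.mem_filter, Finset.mem_range, p]
        push Not
        constructor
        · rintro ⟨i, ⟨h1, h2⟩, rfl⟩
          exact ⟨h2, i, h1, rfl⟩
        · rintro ⟨h2, i, h1, rfl⟩
          exact ⟨i, ⟨h1, h2⟩, rfl⟩
      · intro i hi j hj h
        simp only [Finset.coe_filter, Finset.mem_range, Set.mem_ofPred_eq] at hi hj
        exact hsinj i hi.1 j hj.1 h
    rw [h1, Finset.card_filter_add_card_filter_not, Finset.card_range]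
  have hpm : p m := fun i hi h => by have := hm i hi; omega
  have hcm : Nat.count p m + 2 * R = m := by
    have h1 := hcount m
    rw [Finset.filter_true_of_mem (by intro i hi; exact hm i (Finset.mem_range.mp hi)),
      Finset.card_range] at h1
    exact h1
  have hmem : ∀ i, p (Nat.nth p i) := fun i => Nat.nth_mem_of_infinite hinf i
  have hsm := Nat.nth_strictMono hinf
  have hnm : Nat.nth p (m - 2 * R) = m := by
    have := Nat.nth_count (p := p) hpm
    rwa [show Nat.count p m = m - 2 * R by omega] at this
  refine ⟨fun i => if i < 2 * R then s i else Nat.nth p (i - 2 * R), ?_, ?_, by omega, ?_, ?_, ?_, ?_⟩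
  · intro i hi; simp [hi]
  · intro i j h
    by_cases hi : i < 2 * R <;> by_cases hj : j < 2 * R
    · simp only [hi, hj, if_true] at h
      exact hsinj i hi j hj h
    · simp only [hi, hj, if_true, if_false] at h
      exact absurd h (hmem _ i hi)
    · simp only [hi, hj, if_true, if_false] at h
      exact absurd h.symm (hmem _ j hj)
    · simp only [hi, hj, if_false] at h
      have := hsm.injective h
      omega
  · simp only [show ¬ m < 2 * R by omega, if_false, hnm]
  · intro i hi
    by_cases h : i < 2 * R
    · simp only [h, if_true]; exact hm i h
    · simp only [h, if_false]
      calc _ < Nat.nth p (m - 2 * R) := hsm (by omega)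
        _ = m := hnm
  · intro j hj
    simp only [show ¬ j < 2 * R by omega, show ¬ j + 1 < 2 * R by omega, if_false]
    exact hsm (by omega)
  · intro j hj
    simp only [show ¬ j < 2 * R by omega, if_false]
    have h1 := hcount (Nat.nth p (j - 2 * R))
    rw [Nat.count_nth_of_infinite hinf] at h1
    have h2 := even_count s R _ hs (hmem (j - 2 * R))
    obtain ⟨e, he⟩ := h2
    exact ⟨j - R + e, by omega⟩

open scoped Classical in
theorem complex_count (P : Polynomial ℝ) (hP : P ≠ 0)
    (hsimple : ∀ t : ℝ, P.eval t = 0 → (derivative P).eval t ≠ 0) :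
    Multiset.card (((P.map (algebraMap ℝ ℂ)).roots).filter fun w : ℂ => w.im ≠ 0)
      + P.roots.toFinset.card = P.natDegree := by
  have hnodup : P.roots.Nodup := by
    rw [Multiset.nodup_iff_count_le_one]
    intro t
    rw [count_roots]
    by_contra h
    push Not at h
    have := (one_lt_rootMultiplicity_iff_isRoot hP).mp h
    exact hsimple t this.1 this.2
  have hfin : P.roots.toFinset.card = Multiset.card P.roots := Multiset.toFinset_card_of_nodup hnodup
  have hinj : Function.Injective (algebraMap ℝ ℂ) := (algebraMap ℝ ℂ).injective
  have hreal : ((P.map (algebraMap ℝ ℂ)).roots).filter (fun w : ℂ => ¬ w.im ≠ 0)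
      = P.roots.map (algebraMap ℝ ℂ) := by
    ext w
    by_cases hw : w.im = 0
    · obtain ⟨t, rfl⟩ : ∃ t : ℝ, algebraMap ℝ ℂ t = w := ⟨w.re, by apply Complex.ext <;> simp [hw]⟩
      rw [Multiset.count_filter_of_pos (by simpa using hw), Multiset.count_map_eq_count' _ _ hinj,
        count_roots, count_roots]
      exact (eq_rootMultiplicity_map hinj t).symm
    · rw [Multiset.count_filter_of_neg (by simpa using hw)]
      symm
      rw [Multiset.count_eq_zero]
      intro h
      rw [Multiset.mem_map] at h
      obtain ⟨t, -, rfl⟩ := h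
      simp at hw
  have hcard : Multiset.card ((P.map (algebraMap ℝ ℂ)).roots) = P.natDegree := by
    rw [← natDegree_map (algebraMap ℝ ℂ)]
    exact (IsAlgClosed.card_roots_eq_natDegree)
  rw [hfin, ← hcard, ← Multiset.card_map (algebraMap ℝ ℂ) P.roots, ← hreal, ← Multiset.card_add,
    Multiset.filter_add_not]

open scoped Classical in
/-- For an even partition `λ` and `n ∈ N_λ` with `n ≥ |λ| + λ_1`, the polynomial
`P_n` has exactly `n - |λ|` real zeros, all simple, and exactly `|λ|` non-real
zeros counted with multiplicity. -/
theorem XHermite_zero_count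
    (r : ℕ) (lam : Fin r → ℕ) (hpart : IsEvenPartition r lam)
    (n : ℕ) (hn : XDegSeq r lam n)
    (hbig : ∀ i : Fin r, (∑ i, lam i) + lam i ≤ n) :
    Set.ncard {t : ℝ | (XHermite r lam n).eval t = 0} = n - (∑ i, lam i) ∧
    (∀ t : ℝ, (XHermite r lam n).eval t = 0 →
      (derivative (XHermite r lam n)).eval t ≠ 0) ∧
    Multiset.card
      ((((XHermite r lam n).map (algebraMap ℝ ℂ)).roots).filter
        fun w : ℂ => w.im ≠ 0) = ∑ i, lam i := by
  obtain ⟨⟨hdec, hpos⟩, ⟨R, hR⟩, hpair⟩ := hpart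
  have hr : r = 2 * R := by omega
  subst hr
  have hle : ∑ i, lam i ≤ n := by
    rcases Nat.eq_zero_or_pos R with h | h
    · subst h; simp
    · have := hbig ⟨0, by omega⟩; omega
  let s : ℕ → ℕ := fun i => if h : i < 2 * R then lam (Fin.rev ⟨i, h⟩) + i else 0
  have hsdef : ∀ i (h : i < 2 * R), s i = lam (Fin.rev ⟨i, h⟩) + i := fun i h => by simp [s, h]
  obtain ⟨k, hks, hk, hrm, hkm, hlt, hmono, hp⟩ := exists_seq s R (n + 2 * R - ∑ i, lam i)
    (by
      intro t ht
      rw [hsdef _ (by omega), hsdef _ (by omega)]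
      have h1 := hpair (R - 1 - t) (by omega)
      have e1 : Fin.rev (⟨2 * t + 1, by omega⟩ : Fin (2 * R)) = ⟨2 * (R - 1 - t), by omega⟩ := by
        apply Fin.ext; simp only [Fin.val_rev]; omega
      have e2 : Fin.rev (⟨2 * t, by omega⟩ : Fin (2 * R)) = ⟨2 * (R - 1 - t) + 1, by omega⟩ := by
        apply Fin.ext; simp only [Fin.val_rev]; omega
      rw [e1, e2, h1]
      omega)
    (by
      intro i j hij hj
      rw [hsdef _ (by omega), hsdef _ hj]
      have h1 := hdec (Fin.rev ⟨j, hj⟩) (Fin.rev ⟨i, by omega⟩)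
        (by rw [Fin.rev_le_rev]; exact Fin.mk_le_mk.mpr hij.le)
      omega)
    (by
      intro i hi
      rw [hsdef _ hi]
      have := hbig (Fin.rev ⟨i, hi⟩)
      omega)
  have hpr : Even (∑ i ∈ Finset.range (2 * R), (i + k i)) := by
    have h1 : ∑ i ∈ Finset.range (2 * R), (i + k i) = ∑ i ∈ Finset.range (2 * R), i
        + ∑ i ∈ Finset.range (2 * R), k i := Finset.sum_add_distrib
    apply even_sum
    intro t ht
    rw [hks _ (by omega), hks _ (by omega), hsdef _ (by omega), hsdef _ (by omega)]
    have h1 := hpair (R - 1 - t) (by omega)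
    have e1 : Fin.rev (⟨2 * t + 1, by omega⟩ : Fin (2 * R)) = ⟨2 * (R - 1 - t), by omega⟩ := by
      apply Fin.ext; simp only [Fin.val_rev]; omega
    have e2 : Fin.rev (⟨2 * t, by omega⟩ : Fin (2 * R)) = ⟨2 * (R - 1 - t) + 1, by omega⟩ := by
      apply Fin.ext; simp only [Fin.val_rev]; omega
    rw [e1, e2, h1]
    omega
  have hX : XHermite (2 * R) lam n = sig (fun i => physHermite (k i)) (2 * R)
      (physHermite (n + 2 * R - ∑ i, lam i)) := by
    unfold XHermite sig
    congr 1
    funext j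
    by_cases h : (j : ℕ) < 2 * R
    · simp only [h, dif_pos, if_true]
      rw [hks _ h, hsdef _ h]
    · simp only [h, dif_neg, if_false, not_false_eq_true]
  obtain ⟨hcard, hsimple⟩ := sig_zeros k hk (2 * R) _ hkm hlt hmono hpr hp (n - ∑ i, lam i) (2 * R)
    le_rfl (by omega)
  obtain ⟨hne, hdeg⟩ := (deg_main k hk (2 * R)).2 (n + 2 * R - ∑ i, lam i)
    (fun i hi => (hlt i (by omega)).ne)
  have hτ := tau_natDegree k hk (2 * R)
  have hsum : ∑ i ∈ Finset.range (2 * R), k i = ∑ i, lam i + ∑ i ∈ Finset.range (2 * R), i := by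
    rw [Finset.sum_range, Finset.sum_range, ← Equiv.sum_comp Fin.revPerm lam,
      ← Finset.sum_add_distrib]
    refine Finset.sum_congr rfl fun i _ => ?_
    rw [hks _ i.2, hsdef _ i.2]
    rfl
  rw [← hX] at hcard hsimple hne hdeg
  have hcc := complex_count _ hne hsimple
  refine ⟨?_, hsimple, by omega⟩
  rw [← hcard, ← Set.ncard_coe_finset]
  congr 1
  ext t
  simp [hne]
end
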